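/- Let s ∈ (0,1), let G be a Young function with G' = g satisfying conditions (G1) and (G2), and let Ω ⊂ ℝⁿ be open and bounded. Then for all u, v ∈ W^{s,G}_0(Ω): ∬_{ℝⁿ×ℝⁿ} (g(|D_s u|)·sgn(D_s u) − g(|D_s v|)·sgn(D_s v))·(D_s u − D_s v) dμ ≥ 4·Φ_{s,G}((u − v)/2), where sgn(t) = t/|t| for t ≠ 0 and sgn(0) = 0. -/

import Mathlib

open MeasureTheory Filter Set Topology
open scoped ENNReal

noncomputable section

abbrev Eu (n : ℕ) := EuclideanSpace ℝ (Fin n)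

/-- sgn(t) = t/|t| for t ≠ 0, sgn(0)=0. -/
def rsgn (t : ℝ) : ℝ := if t = 0 then 0 else t / |t|

/-- `G` is a Young function with right-continuous density `g = G'`. -/
structure IsYoungPair (G g : ℝ → ℝ) : Prop where
  g_zero : g 0 = 0
  g_pos : ∀ t > 0, 0 < g t
  g_mono : MonotoneOn g (Ici (0:ℝ))
  g_rightCont : ∀ t ≥ (0:ℝ), ContinuousWithinAt g (Ici t) t
  g_tendsto : Tendsto g atTop atTop
  G_eq : ∀ t ≥ (0:ℝ), G t = ∫ τ in (0:ℝ)..t, g τ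

/-- Condition (G1): `1 < p⁻ ≤ p⁺ < ∞` and `p⁻ ≤ t g(t)/G(t) ≤ p⁺` for `t > 0`. -/
def CondG1 (G g : ℝ → ℝ) (pm pp : ℝ) : Prop :=
  1 < pm ∧ pm ≤ pp ∧ ∀ t > 0, pm ≤ t * g t / G t ∧ t * g t / G t ≤ pp

/-- Condition (G2): `t ↦ G (√ t)` is convex on `[0,∞)`. -/
def CondG2 (G : ℝ → ℝ) : Prop := ConvexOn ℝ (Ici (0:ℝ)) (fun t => G (Real.sqrt t))

/-- Condition (G3). -/
def CondG3 (G : ℝ → ℝ) (n : ℕ) (s : ℝ) : Prop :=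
  ∃ Ginv : ℝ → ℝ, (∀ t ≥ (0:ℝ), Ginv (G t) = t) ∧ (∀ t ≥ (0:ℝ), G (Ginv t) = t) ∧
    IntegrableOn (fun τ => Ginv τ / τ ^ (((n : ℝ) + s) / n)) (Ioo 0 1) ∧
    ¬ IntegrableOn (fun τ => Ginv τ / τ ^ (((n : ℝ) + s) / n)) (Ioi 1)

/-- The modular `Φ_{G,Ω}(u) = ∫_Ω G(|u|) dx`. -/
def PhiG (n : ℕ) (G : ℝ → ℝ) (Ω : Set (Eu n)) (u : Eu n → ℝ) : ℝ≥0∞ :=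
  ∫⁻ x in Ω, ENNReal.ofReal (G |u x|)

/-- The s-Hölder quotient. -/
def Ds (n : ℕ) (s : ℝ) (u : Eu n → ℝ) (x y : Eu n) : ℝ := (u x - u y) / ‖x - y‖ ^ s

/-- The fractional modular `Φ_{s,G}(u) = ∬ G(|D_s u|) dμ`, `dμ = dx dy/|x-y|ⁿ`. -/
def PhisG (n : ℕ) (s : ℝ) (G : ℝ → ℝ) (u : Eu n → ℝ) : ℝ≥0∞ :=
  ∫⁻ p : Eu n × Eu n, ENNReal.ofReal (G |Ds n s u p.1 p.2| / ‖p.1 - p.2‖ ^ (n : ℝ))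

/-- Luxemburg norm on `L^G(Ω)`. -/
def luxNorm (n : ℕ) (G : ℝ → ℝ) (Ω : Set (Eu n)) (u : Eu n → ℝ) : ℝ :=
  sInf {l : ℝ | 0 < l ∧ PhiG n G Ω (fun x => u x / l) ≤ 1}

/-- Gagliardo `(s,G)`-seminorm. -/
def gagliardo (n : ℕ) (s : ℝ) (G : ℝ → ℝ) (u : Eu n → ℝ) : ℝ :=
  sInf {l : ℝ | 0 < l ∧ PhisG n s G (fun x => u x / l) ≤ 1}

/-- Membership in `W^{s,G}_0(Ω)`. -/
def MemW0 (n : ℕ) (s : ℝ) (G : ℝ → ℝ) (Ω : Set (Eu n)) (u : Eu n → ℝ) : Prop :=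
  Measurable u ∧ PhiG n G univ u < ⊤ ∧ PhisG n s G u < ⊤ ∧
    ∀ᵐ x : Eu n ∂volume, x ∉ Ω → u x = 0

/-- `λ` is a Dirichlet eigenvalue of the fractional g-Laplacian with eigenfunction `u`. -/
def DirichletEigen (n : ℕ) (s : ℝ) (G g : ℝ → ℝ) (Ω : Set (Eu n)) (lam : ℝ)
    (u : Eu n → ℝ) : Prop :=
  MemW0 n s G Ω u ∧ ¬ (u =ᵐ[(volume : Measure (Eu n))] (fun _ => (0:ℝ))) ∧
  ∀ v : Eu n → ℝ, MemW0 n s G Ω v →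
    (∫ p : Eu n × Eu n,
        g |Ds n s u p.1 p.2| * rsgn (Ds n s u p.1 p.2) * Ds n s v p.1 p.2 / ‖p.1 - p.2‖ ^ (n : ℝ))
      = lam * ∫ x in Ω, g |u x| * rsgn (u x) * v x

/-- `Ω` has Lipschitz (`C^{0,1}`) boundary: locally, `Ω` is bi-Lipschitz equivalent to a halfspace. -/
def HasLipschitzBoundary (n : ℕ) (Ω : Set (Eu n)) : Prop :=
  ∀ x ∈ frontier Ω, ∃ U : Set (Eu n), IsOpen U ∧ x ∈ U ∧
    ∃ φ ψ : Eu n → Eu n, (∃ K, LipschitzWith K φ) ∧ (∃ K, LipschitzWith K ψ) ∧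
      (∀ y ∈ U, ψ (φ y) = y) ∧
      ∃ e : Eu n, e ≠ 0 ∧ ∀ y ∈ U, (y ∈ Ω ↔ 0 < @inner ℝ _ _ e (φ y))

/-- Complementary Young function `G̃(t) = sup{t w − G(w) : w > 0}`. -/
def complYoung (G : ℝ → ℝ) (t : ℝ) : ℝ := sSup {y : ℝ | ∃ w > (0:ℝ), y = t * w - G w}

/-- Modular over `ℝ²ⁿ ∖ (Ωᶜ × Ωᶜ)`. -/
def PhisGStar (n : ℕ) (s : ℝ) (G : ℝ → ℝ) (Ω : Set (Eu n)) (u : Eu n → ℝ) : ℝ≥0∞ :=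
  ∫⁻ p in {p : Eu n × Eu n | p.1 ∈ Ω ∨ p.2 ∈ Ω},
    ENNReal.ofReal (G |Ds n s u p.1 p.2| / ‖p.1 - p.2‖ ^ (n : ℝ))

/-- The boundary modular `∫_{ℝⁿ∖Ω} β G(|u|)`. -/
def PhiGBeta (n : ℕ) (G : ℝ → ℝ) (Ω : Set (Eu n)) (β : Eu n → ℝ) (u : Eu n → ℝ) : ℝ≥0∞ :=
  ∫⁻ x in Ωᶜ, ENNReal.ofReal (β x * G |u x|)

/-- The functional `J_β`. -/
def Jbeta (n : ℕ) (s : ℝ) (G : ℝ → ℝ) (Ω : Set (Eu n)) (β : Eu n → ℝ) (u : Eu n → ℝ) : ℝ≥0∞ :=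
  PhisGStar n s G Ω u + PhiGBeta n G Ω β u

/-- Membership in the space `X_β(Ω)`. -/
def MemXbeta (n : ℕ) (s : ℝ) (G : ℝ → ℝ) (Ω : Set (Eu n)) (β : Eu n → ℝ) (u : Eu n → ℝ) :
    Prop :=
  Measurable u ∧ PhisGStar n s G Ω u < ⊤ ∧ PhiG n G Ω u < ⊤ ∧ PhiGBeta n G Ω β u < ⊤

/-- Luxemburg-type norm associated to the modular `PhiGBeta`. -/
def luxNormBeta (n : ℕ) (G : ℝ → ℝ) (Ω : Set (Eu n)) (β : Eu n → ℝ) (u : Eu n → ℝ) : ℝ :=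
  sInf {l : ℝ | 0 < l ∧ PhiGBeta n G Ω β (fun x => u x / l) ≤ 1}

/-- Seminorm associated to `PhisGStar`. -/
def gagliardoStar (n : ℕ) (s : ℝ) (G : ℝ → ℝ) (Ω : Set (Eu n)) (u : Eu n → ℝ) : ℝ :=
  sInf {l : ℝ | 0 < l ∧ PhisGStar n s G Ω (fun x => u x / l) ≤ 1}

/-- Norm of the space `X_β(Ω)`. -/
def XbetaNorm (n : ℕ) (s : ℝ) (G : ℝ → ℝ) (Ω : Set (Eu n)) (β : Eu n → ℝ) (u : Eu n → ℝ) : ℝ :=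
  gagliardoStar n s G Ω u + luxNorm n G Ω u + luxNormBeta n G Ω β u

/-- `λ` is a Robin eigenvalue with eigenfunction `u`. -/
def RobinEigen (n : ℕ) (s : ℝ) (G g : ℝ → ℝ) (Ω : Set (Eu n)) (β : Eu n → ℝ) (lam : ℝ)
    (u : Eu n → ℝ) : Prop :=
  MemXbeta n s G Ω β u ∧ ¬ (u =ᵐ[(volume : Measure (Eu n))] (fun _ => (0:ℝ))) ∧
  ∀ v : Eu n → ℝ, MemXbeta n s G Ω β v →
    (∫ p in {p : Eu n × Eu n | p.1 ∈ Ω ∨ p.2 ∈ Ω},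
        g |Ds n s u p.1 p.2| * rsgn (Ds n s u p.1 p.2) * Ds n s v p.1 p.2 / ‖p.1 - p.2‖ ^ (n : ℝ))
      = lam * (∫ x in Ω, g |u x| * rsgn (u x) * v x)
          - ∫ x in Ωᶜ, β x * (g |u x| * rsgn (u x) * v x)

/-- Sequential compactness of `K` with respect to a distance-like function `d`. -/
def SeqCompactD {X : Type*} (d : X → X → ℝ) (K : Set X) : Prop :=
  ∀ f : ℕ → X, (∀ j, f j ∈ K) → ∃ u ∈ K, ∃ φ : ℕ → ℕ, StrictMono φ ∧
    Tendsto (fun j => d (f (φ j)) u) atTop (𝓝 (0:ℝ))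

/-- `h` is sequentially continuous on `K` with respect to `d`. -/
def SeqContOnD {X Y : Type*} [TopologicalSpace Y] (d : X → X → ℝ) (K : Set X) (h : X → Y) :
    Prop :=
  ∀ f : ℕ → X, ∀ u, (∀ j, f j ∈ K) → u ∈ K →
    Tendsto (fun j => d (f j) u) atTop (𝓝 (0:ℝ)) →
    Tendsto (fun j => h (f j)) atTop (𝓝 (h u))

/-- The Krasnoselskii genus of `K` is at least `k`: every continuous odd map
`h : K → ℝᵐ ∖ {0}` forces `m ≥ k`. -/
def GenusGeD {X : Type*} [Neg X] (d : X → X → ℝ) (K : Set X) (k : ℕ) : Prop :=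
  ∀ m : ℕ, ∀ h : X → (Fin m → ℝ),
    SeqContOnD d K h → (∀ u ∈ K, h (-u) = - h u) → (∀ u ∈ K, h u ≠ 0) → k ≤ m

/-! Testing the subgradient inequality of `G ∘ ‖·‖` at `a` and at `b` against the midpoint of `a` and
`b` bounds the monotonicity bracket below by `2 (G ‖a‖ + G ‖b‖) - 4 G ‖(a + b) / 2‖`. Under (G2) the
parallelogram law makes `G ∘ ‖·‖` satisfy Clarkson's inequality, so this bound is at least
`4 G ‖(a - b) / 2‖`. Taking for `a` and `b` the Hölder quotients of `u` and `v` and integrating gives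
the theorem. -/

open scoped RealInnerProductSpace

lemma mul_sub_le_integral_of_monotoneOn {g : ℝ → ℝ} {x y : ℝ} (hg : MonotoneOn g (uIcc x y)) :
    g x * (y - x) ≤ ∫ τ in x..y, g τ := by
  have hint : IntervalIntegrable g volume x y := hg.intervalIntegrable
  rcases le_total x y with hxy | hyx
  · calc g x * (y - x) = ∫ _ in x..y, g x := by simp [mul_comm]
      _ ≤ ∫ τ in x..y, g τ :=
        intervalIntegral.integral_mono_on hxy intervalIntegrable_const hint fun τ hτ =>
          hg left_mem_uIcc (Icc_subset_uIcc hτ) hτ.1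
  · calc g x * (y - x) = -∫ _ in y..x, g x := by simp; ring
      _ ≤ -∫ τ in y..x, g τ :=
        neg_le_neg <| intervalIntegral.integral_mono_on hyx hint.symm intervalIntegrable_const
          fun τ hτ => hg (Icc_subset_uIcc' hτ) left_mem_uIcc hτ.2
      _ = ∫ τ in x..y, g τ := (intervalIntegral.integral_symm y x).symm

lemma add_le_map_add_of_convexOn_Ici {𝕜 : Type*} [Field 𝕜] [LinearOrder 𝕜] [IsStrictOrderedRing 𝕜]
    {f : 𝕜 → 𝕜} (hf : ConvexOn 𝕜 (Ici 0) f) (hf0 : f 0 ≤ 0) {x y : 𝕜} (hx : 0 ≤ x) (hy : 0 ≤ y) :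
    f x + f y ≤ f (x + y) := by
  rcases (add_nonneg hx hy).eq_or_lt with hxy | hxy
  · obtain ⟨rfl, rfl⟩ := (add_eq_zero_iff_of_nonneg hx hy).1 hxy.symm
    simpa only [add_zero, add_le_iff_nonpos_left] using hf0
  have scale {t : 𝕜} (ht : 0 ≤ t) (ht1 : t ≤ 1) : f (t * (x + y)) ≤ t * f (x + y) := by
    have hconv := hf.2 hxy.le self_mem_Ici ht (sub_nonneg.2 ht1) (add_sub_cancel t 1)
    simp only [smul_eq_mul, mul_zero, add_zero] at hconv
    linarith [mul_nonpos_of_nonneg_of_nonpos (sub_nonneg.2 ht1) hf0]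
  calc f x + f y = f (x / (x + y) * (x + y)) + f (y / (x + y) * (x + y)) := by
        simp only [div_mul_cancel₀ _ hxy.ne']
    _ ≤ x / (x + y) * f (x + y) + y / (x + y) * f (x + y) :=
        add_le_add
          (scale (div_nonneg hx hxy.le) ((div_le_one hxy).2 (le_add_of_nonneg_right hy)))
          (scale (div_nonneg hy hxy.le) ((div_le_one hxy).2 (le_add_of_nonneg_left hx)))
    _ = f (x + y) := by rw [← add_mul, ← add_div, div_self hxy.ne', one_mul]

/-- The radial vector field `x ↦ g(‖x‖) x / ‖x‖`, which is the gradient of `x ↦ G(‖x‖)` when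
`G' = g`. At the origin division by zero gives it the value `0`. -/
def radialField {E : Type*} [Norm E] [SMul ℝ E] (g : ℝ → ℝ) (x : E) : E := (g ‖x‖ / ‖x‖) • x

lemma radialField_real (g : ℝ → ℝ) (t : ℝ) : radialField g t = g |t| * rsgn t := by
  by_cases ht : t = 0
  · simp [radialField, rsgn, ht]
  · simp only [radialField, rsgn, if_neg ht, smul_eq_mul, Real.norm_eq_abs, div_mul_eq_mul_div,
      mul_div_assoc]

section InnerProductSpace

variable {E : Type*} [SeminormedAddCommGroup E] [InnerProductSpace ℝ E] {G g : ℝ → ℝ}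

lemma inner_radialField_sub_le {a : E} (hga : 0 ≤ g ‖a‖) (c : E) :
    ⟪radialField g a, c - a⟫ ≤ g ‖a‖ * (‖c‖ - ‖a‖) :=
  calc ⟪radialField g a, c - a⟫ = g ‖a‖ / ‖a‖ * (⟪a, c⟫ - ‖a‖ ^ 2) := by
        rw [radialField, real_inner_smul_left, inner_sub_right, real_inner_self_eq_norm_sq]
    _ ≤ g ‖a‖ / ‖a‖ * (‖a‖ * ‖c‖ - ‖a‖ ^ 2) := by
        gcongr
        exact real_inner_le_norm a c
    _ = g ‖a‖ * (‖a‖ / ‖a‖ * ‖c‖ - ‖a‖) := by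
        rcases eq_or_ne ‖a‖ 0 with ha | ha
        · simp [ha]
        · field_simp
    _ ≤ g ‖a‖ * (‖c‖ - ‖a‖) := by
        gcongr
        exact mul_le_of_le_one_left (norm_nonneg c) (div_self_le_one _)

namespace IsYoungPair

lemma map_zero (hY : IsYoungPair G g) : G 0 = 0 := by
  rw [hY.G_eq 0 le_rfl, intervalIntegral.integral_same]

lemma density_nonneg (hY : IsYoungPair G g) {t : ℝ} (ht : 0 ≤ t) : 0 ≤ g t :=
  hY.g_zero ▸ hY.g_mono self_mem_Ici ht ht

lemma add_density_mul_sub_le (hY : IsYoungPair G g) {x y : ℝ} (hx : 0 ≤ x) (hy : 0 ≤ y) :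
    G x + g x * (y - x) ≤ G y := by
  have hmono {a b : ℝ} (ha : 0 ≤ a) (hb : 0 ≤ b) : MonotoneOn g (uIcc a b) :=
    hY.g_mono.mono fun _ hτ => (le_min ha hb).trans hτ.1
  calc G x + g x * (y - x) ≤ (∫ τ in (0 : ℝ)..x, g τ) + ∫ τ in x..y, g τ := by
        rw [hY.G_eq x hx]
        gcongr
        exact mul_sub_le_integral_of_monotoneOn (hmono hx hy)
    _ = ∫ τ in (0 : ℝ)..y, g τ :=
        intervalIntegral.integral_add_adjacent_intervals
          (hmono le_rfl hx).intervalIntegrable (hmono hx hy).intervalIntegrable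
    _ = G y := (hY.G_eq y hy).symm

lemma add_inner_radialField_sub_le (hY : IsYoungPair G g) (a c : E) :
    G ‖a‖ + ⟪radialField g a, c - a⟫ ≤ G ‖c‖ :=
  calc G ‖a‖ + ⟪radialField g a, c - a⟫ ≤ G ‖a‖ + g ‖a‖ * (‖c‖ - ‖a‖) := by
        gcongr
        exact inner_radialField_sub_le (hY.density_nonneg (norm_nonneg a)) c
    _ ≤ G ‖c‖ := hY.add_density_mul_sub_le (norm_nonneg a) (norm_nonneg c)

end IsYoungPair

lemma CondG2.clarkson (hG2 : CondG2 G) (hG0 : G 0 ≤ 0) (a b : E) :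
    G ‖(1 / 2 : ℝ) • (a + b)‖ + G ‖(1 / 2 : ℝ) • (a - b)‖ ≤ 1 / 2 * G ‖a‖ + 1 / 2 * G ‖b‖ := by
  have parallelogram :
      ‖(1 / 2 : ℝ) • (a + b)‖ ^ 2 + ‖(1 / 2 : ℝ) • (a - b)‖ ^ 2 =
        1 / 2 * ‖a‖ ^ 2 + 1 / 2 * ‖b‖ ^ 2 := by
    simp only [norm_smul, mul_pow, norm_add_sq_real, norm_sub_sq_real]
    norm_num
    ring
  have hsuper := add_le_map_add_of_convexOn_Ici hG2 (by simpa only [Real.sqrt_zero] using hG0)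
    (sq_nonneg ‖(1 / 2 : ℝ) • (a + b)‖) (sq_nonneg ‖(1 / 2 : ℝ) • (a - b)‖)
  have hmid := hG2.2 (sq_nonneg ‖a‖) (sq_nonneg ‖b‖)
    one_half_pos.le one_half_pos.le (add_halves (1 : ℝ))
  simp only [parallelogram, Real.sqrt_sq (norm_nonneg _)] at hsuper
  simp only [smul_eq_mul, Real.sqrt_sq (norm_nonneg _)] at hmid
  exact hsuper.trans hmid

lemma IsYoungPair.four_mul_le_inner_radialField_sub (hY : IsYoungPair G g) (hG2 : CondG2 G)
    (a b : E) :
    4 * G ‖(1 / 2 : ℝ) • (a - b)‖ ≤ ⟪radialField g a - radialField g b, a - b⟫ := by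
  set m : E := (1 / 2 : ℝ) • (a + b) with hm
  have hma : m - a = -((1 / 2 : ℝ) • (a - b)) := by rw [hm]; module
  have hmb : m - b = (1 / 2 : ℝ) • (a - b) := by rw [hm]; module
  have hsub_a := hY.add_inner_radialField_sub_le a m
  have hsub_b := hY.add_inner_radialField_sub_le b m
  have hclarkson := hG2.clarkson hY.map_zero.le a b
  rw [hma, inner_neg_right, real_inner_smul_right] at hsub_a
  rw [hmb, real_inner_smul_right] at hsub_b
  rw [inner_sub_left]
  linarith

end InnerProductSpace

lemma Ds_half_sub (n : ℕ) (s : ℝ) (u v : Eu n → ℝ) (x y : Eu n) :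
    Ds n s (fun z => (u z - v z) / 2) x y = (1 / 2 : ℝ) • (Ds n s u x y - Ds n s v x y) := by
  simp only [Ds, smul_eq_mul]
  ring

theorem statement8_general (n : ℕ) (s : ℝ) {G g : ℝ → ℝ} (hY : IsYoungPair G g)
    (hG2 : CondG2 G) (u v : Eu n → ℝ) :
    (4 : ℝ≥0∞) * PhisG n s G (fun x => (u x - v x) / 2) ≤
      ∫⁻ p : Eu n × Eu n,
        ENNReal.ofReal
          ((g |Ds n s u p.1 p.2| * rsgn (Ds n s u p.1 p.2)
              - g |Ds n s v p.1 p.2| * rsgn (Ds n s v p.1 p.2))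
            * (Ds n s u p.1 p.2 - Ds n s v p.1 p.2) / ‖p.1 - p.2‖ ^ (n : ℝ)) := by
  rw [PhisG, ← lintegral_const_mul' _ _ (by finiteness)]
  refine lintegral_mono fun p => ?_
  have hpointwise := hY.four_mul_le_inner_radialField_sub hG2 (Ds n s u p.1 p.2) (Ds n s v p.1 p.2)
  rw [← Ds_half_sub, Real.norm_eq_abs, Real.inner_apply, radialField_real, radialField_real]
    at hpointwise
  calc 4 * ENNReal.ofReal
          (G |Ds n s (fun x => (u x - v x) / 2) p.1 p.2| / ‖p.1 - p.2‖ ^ (n : ℝ))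
      = ENNReal.ofReal
          (4 * G |Ds n s (fun x => (u x - v x) / 2) p.1 p.2| / ‖p.1 - p.2‖ ^ (n : ℝ)) := by
        rw [mul_div_assoc, ENNReal.ofReal_mul zero_le_four, ENNReal.ofReal_ofNat]
    _ ≤ _ := by gcongr

/-- Integral monotonicity inequality on `W^{s,G}_0(Ω)`. -/
theorem statement8 (n : ℕ) (s : ℝ) (hs : s ∈ Ioo (0:ℝ) 1) (G g : ℝ → ℝ) (pm pp : ℝ)
    (hY : IsYoungPair G g) (hG1 : CondG1 G g pm pp) (hG2 : CondG2 G)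
    (Ω : Set (Eu n)) (hΩo : IsOpen Ω) (hΩb : Bornology.IsBounded Ω)
    (u v : Eu n → ℝ) (hu : MemW0 n s G Ω u) (hv : MemW0 n s G Ω v) :
    (4 : ℝ≥0∞) * PhisG n s G (fun x => (u x - v x) / 2) ≤
      ∫⁻ p : Eu n × Eu n,
        ENNReal.ofReal
          ((g |Ds n s u p.1 p.2| * rsgn (Ds n s u p.1 p.2)
              - g |Ds n s v p.1 p.2| * rsgn (Ds n s v p.1 p.2))
            * (Ds n s u p.1 p.2 - Ds n s v p.1 p.2) / ‖p.1 - p.2‖ ^ (n : ℝ)) := by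
  exact statement8_general n s hY hG2 u v
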